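/- arXiv:2508.04518 — 2 statements merged into one kernel-verified Lean document; each statement's English description precedes it below -/
import Mathlib

section
/- Let a ≤ 0 and b ≥ 0 be real numbers, at least one of which is nonzero. Let G be a connected simple graph with n vertices and chromatic number χ, where 2 ≤ χ ≤ n. Then Gut_{a,b}(G) ≥ Gut_{a,b}(K_{n1,n2,…,nχ}), where K_{n1,n2,…,nχ} is the complete χ-partite graph on n vertices whose part sizes satisfy |n_i − n_j| ≤ 1 for all 1 ≤ i < j ≤ χ and n1 + n2 + ⋯ + nχ = n. Equality holds if and only if G is isomorphic to this complete χ-partite graph K_{n1,n2,…,nχ}. -/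
open scoped Classical

/-- The general Gutman index `Gut_{a,b}(G)`: the sum, over all unordered pairs of
distinct vertices `{u, v}`, of `(d(u)·d(v))^a · (dist(u,v))^b` (real powers). -/
noncomputable def gut {V : Type*} [Fintype V] (G : SimpleGraph V) (a b : ℝ) : ℝ :=
  ∑ e ∈ Finset.univ.filter (fun e : Sym2 V => ¬ e.IsDiag),
    Sym2.lift ⟨fun u v =>
      ((G.degree u : ℝ) * (G.degree v : ℝ)) ^ a * ((G.dist u v : ℝ)) ^ b,
      fun u v => by
        show ((G.degree u : ℝ) * (G.degree v : ℝ)) ^ a * ((G.dist u v : ℝ)) ^ b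
            = ((G.degree v : ℝ) * (G.degree u : ℝ)) ^ a * ((G.dist v u : ℝ)) ^ b
        rw [mul_comm ((G.degree u : ℝ)), SimpleGraph.dist_comm]⟩ e

lemma alg_h {x y c d c' d' : ℝ} (hy : 1 ≤ y) (hxy : y + 2 ≤ x) (hd : 0 < d) (hdd : d ≤ d') (hdc : d' ≤ c')
    (hcd : c' * d' ≤ c * d) : (x-1)*c' + (y+1)*d' ≤ x*c + y*d := by
  obtain ⟨t, rfl⟩ : ∃ t, d' = t * d := ⟨d'/d, by field_simp⟩
  have ht : 1 ≤ t := by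
    by_contra h; push Not at h; nlinarith
  have hc : c' * t ≤ c := by
    by_contra h; push Not at h; nlinarith
  have hd' : d ≤ c' := by linarith
  have h1 : x * (c' * t) ≤ x * c := by gcongr; linarith
  have h2 : (x * (t-1) + 1) * (t*d) ≤ (x * (t-1) + 1) * c' := by
    gcongr
    have : 0 ≤ x * (t-1) := mul_nonneg (by linarith) (by linarith)
    linarith
  have h3 : 0 ≤ d * ((t-1) * (x * t - y)) := by
    apply mul_nonneg hd.le; apply mul_nonneg (by linarith); nlinarith
  nlinarith

lemma alg_k {x y c d c' d' : ℝ} (hy : 1 ≤ y) (hxy : y + 2 ≤ x) (hd : 0 < d) (hdd : d ≤ d') (hdc : d' ≤ c')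
    (hcd : c' * d' ≤ c * d) :
    (x-1)*(x-2)*c'^2 + (y+1)*y*d'^2 < x*(x-1)*c^2 + y*(y-1)*d^2 := by
  obtain ⟨t, rfl⟩ : ∃ t, d' = t * d := ⟨d'/d, by field_simp⟩
  have ht : 1 ≤ t := by
    by_contra h; push Not at h; nlinarith
  have hc : c' * t ≤ c := by
    by_contra h; push Not at h; nlinarith
  have hd' : d ≤ c' := by linarith
  have hτ : 0 ≤ t^2 - 1 := by nlinarith
  have h1 : x * (x-1) * (c' * t)^2 ≤ x * (x-1) * c^2 := by
    have : 0 ≤ x * (x-1) := mul_nonneg (by linarith) (by linarith)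
    have : 0 ≤ c' * t := mul_nonneg (by linarith) (by linarith)
    gcongr
  have h2 : (x-1) * (x * (t^2-1) + 2) * (t*d)^2 ≤ (x-1) * (x * (t^2-1) + 2) * c'^2 := by
    have : 0 ≤ x * (t^2-1) := mul_nonneg (by linarith) hτ
    have : 0 ≤ (x-1) * (x * (t^2-1) + 2) := mul_nonneg (by linarith) (by linarith)
    have : 0 ≤ t * d := mul_nonneg (by linarith) hd.le
    gcongr
  have h3 : 0 < d^2 * (2 * t^2*(x-1-y) + (t^2-1) * (t^2 * (x*(x-1)) - y*(y-1))) := by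
    apply mul_pos (by positivity)
    have e1 : y*(y-1) ≤ x*(x-1) := by nlinarith
    have e2 : 0 ≤ x*(x-1) := mul_nonneg (by linarith) (by linarith)
    have e3 : 0 ≤ (t^2-1) * (t^2 * (x*(x-1)) - y*(y-1)) := mul_nonneg hτ (by nlinarith)
    have : 0 < 2 * t^2*(x-1-y) := mul_pos (by positivity) (by linarith)
    linarith
  nlinarith

lemma alg_A {x y c d c' d' : ℝ} (hy : 1 ≤ y) (hxy : y + 2 ≤ x) (hd : 0 < d) (hdd : d ≤ d') (hdc : d' ≤ c')
    (hcd : c' * d' ≤ c * d) :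
    (x-1)*(x-2)*c'^2 + (y+1)*y*d'^2 + 2*(x-1)*(y+1)*(c'*d') ≤ x*(x-1)*c^2 + y*(y-1)*d^2 + 2*x*y*(c*d) ∧
    (d < d' → (x-1)*(x-2)*c'^2 + (y+1)*y*d'^2 + 2*(x-1)*(y+1)*(c'*d') < x*(x-1)*c^2 + y*(y-1)*d^2 + 2*x*y*(c*d)) := by
  obtain ⟨t, rfl⟩ : ∃ t, d' = t * d := ⟨d'/d, by field_simp⟩
  have ht : 1 ≤ t := by
    by_contra h; push Not at h; nlinarith
  have hc : c' * t ≤ c := by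
    by_contra h; push Not at h; nlinarith
  have hd' : d ≤ c' := by linarith
  have hτ : 0 ≤ t^2 - 1 := by nlinarith
  have h1 : x * (x-1) * (c' * t)^2 ≤ x * (x-1) * c^2 := by
    have : 0 ≤ x * (x-1) := mul_nonneg (by linarith) (by linarith)
    have : 0 ≤ c' * t := mul_nonneg (by linarith) (by linarith)
    gcongr
  have h0 : 2*x*y*(c' * (t*d)) ≤ 2*x*y*(c*d) := by
    have : 0 ≤ 2*x*y := mul_nonneg (by linarith) (by linarith)
    gcongr
  have htd : 0 < t * d := mul_pos (by linarith) hd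
  have h2 : 0 ≤ (x-1) * (x * (t^2-1)) * (c'^2 - (t*d)^2) := by
    have : 0 ≤ (x-1) * (x * (t^2-1)) := mul_nonneg (by linarith) (mul_nonneg (by linarith) hτ)
    exact mul_nonneg this (by nlinarith)
  have h4 : 0 ≤ (c' - t*d) * ((x-1)*c' + y*(t*d)) :=
    mul_nonneg (by linarith) (add_nonneg (mul_nonneg (by linarith) (by linarith)) (mul_nonneg (by linarith) htd.le))
  have e1 : y*(y-1) < x*(x-1) := by nlinarith
  have e2 : 0 ≤ x*(x-1) := mul_nonneg (by linarith) (by linarith)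
  have e4 : 0 < t^2 * (x*(x-1)) - y*(y-1) := by nlinarith
  have key : d^2 * ((t^2-1) * (t^2 * (x*(x-1)) - y*(y-1))) ≤ 
     (x*(x-1)*c^2 + y*(y-1)*d^2 + 2*x*y*(c*d)) - ((x-1)*(x-2)*c'^2 + (y+1)*y*(t*d)^2 + 2*(x-1)*(y+1)*(c'*(t*d))) := by
    nlinarith
  constructor
  · have : 0 ≤ d^2 * ((t^2-1) * (t^2 * (x*(x-1)) - y*(y-1))) := by
      apply mul_nonneg (by positivity); exact mul_nonneg hτ e4.le
    linarith
  · intro hlt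
    have : 1 < t := by by_contra h; push Not at h; nlinarith
    have : 0 < d^2 * ((t^2-1) * (t^2 * (x*(x-1)) - y*(y-1))) := by
      apply mul_pos (by positivity); exact mul_pos (by nlinarith) e4
    linarith

noncomputable def Phi {χ : ℕ} (n : ℕ) (a B : ℝ) (q : Fin χ → ℕ) : ℝ :=
  (∑ i, (q i : ℝ) * ((n : ℝ) - q i) ^ a) ^ 2
    + (B - 1) * ∑ i, ((q i : ℝ) * ((n : ℝ) - q i) ^ a) ^ 2
    - B * ∑ i, (q i : ℝ) * (((n : ℝ) - q i) ^ a) ^ 2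

lemma sum_split {χ : ℕ} {M : Type*} [AddCommMonoid M] {i j : Fin χ} (hij : i ≠ j) (F : Fin χ → M) :
    ∑ k, F k = F i + (F j + ∑ k ∈ (Finset.univ.erase i).erase j, F k) := by
  rw [Finset.add_sum_erase _ _ (by simp [hij.symm]), Finset.add_sum_erase _ _ (by simp)]

lemma lt_of_parts {χ n : ℕ} (hχ2 : 2 ≤ χ) (q : Fin χ → ℕ) (hq : ∀ i, 1 ≤ q i) (hs : ∑ i, q i = n) (i : Fin χ) :
    q i < n := by
  obtain ⟨j, hij⟩ : ∃ j : Fin χ, i ≠ j := by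
    have : Nontrivial (Fin χ) := Fin.nontrivial_iff_two_le.2 hχ2
    obtain ⟨j, hj⟩ := exists_ne i
    exact ⟨j, hj.symm⟩
  rw [sum_split hij] at hs
  have := hq j
  omega

lemma transfer {χ n : ℕ} (hχ2 : 2 ≤ χ) (a b : ℝ) (ha : a ≤ 0) (hb : 0 ≤ b) (hab : a ≠ 0 ∨ b ≠ 0)
    (q : Fin χ → ℕ) (hq : ∀ i, 1 ≤ q i) (hs : ∑ i, q i = n) (i j : Fin χ) (h : q j + 2 ≤ q i) :
    ∃ q' : Fin χ → ℕ, (∀ i, 1 ≤ q' i) ∧ ∑ i, q' i = n ∧ ∑ i, (q' i)^2 < ∑ i, (q i)^2 ∧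
      Phi n a ((2:ℝ)^b) q' < Phi n a ((2:ℝ)^b) q := by
  have hij : i ≠ j := by rintro rfl; omega
  have hqi := lt_of_parts hχ2 q hq hs i
  obtain ⟨x, hx⟩ : ∃ x, q i = x + 1 := ⟨q i - 1, by omega⟩
  obtain ⟨y, hy⟩ : ∃ y, q j = y := ⟨_, rfl⟩
  have hxy : y + 1 ≤ x := by omega
  have hy1 : 1 ≤ y := hy ▸ hq j
  set q' : Fin χ → ℕ := fun k => if k = i then x else if k = j then y + 1 else q k with hq'
  have q'i : q' i = x := by simp [hq']
  have q'j : q' j = y + 1 := by simp [hq', hij.symm]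
  have q'k : ∀ k ∈ (Finset.univ.erase i).erase j, q' k = q k := by
    intro k hk
    simp only [Finset.mem_erase, Finset.mem_univ, and_true] at hk
    simp [hq', hk.1, hk.2]
  refine ⟨q', ?_, ?_, ?_, ?_⟩
  · intro k
    simp only [hq']
    split_ifs
    · omega
    · omega
    · exact hq k
  · rw [sum_split hij] at hs ⊢
    rw [Finset.sum_congr rfl q'k, q'i, q'j]
    rw [hx, hy] at hs
    rw [← hs]
    ring
  · rw [sum_split hij, sum_split hij (fun k => q k ^2)]
    rw [Finset.sum_congr rfl (fun k hk => by rw [q'k k hk]), q'i, q'j, hx, hy]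
    nlinarith
  · have hB : 1 ≤ (2:ℝ)^b := Real.one_le_rpow (by norm_num) hb
    have hB' : b ≠ 0 → 1 < (2:ℝ)^b := fun h => Real.one_lt_rpow (by norm_num) (lt_of_le_of_ne hb h.symm)
    set B := (2:ℝ)^b
    unfold Phi
    simp only [sum_split hij]
    have e1 : ∀ F : ℕ → ℝ, ∑ k ∈ (Finset.univ.erase i).erase j, F (q' k) = ∑ k ∈ (Finset.univ.erase i).erase j, F (q k) :=
      fun F => Finset.sum_congr rfl (fun k hk => by rw [q'k k hk])
    rw [e1 (fun k => (k:ℝ) * ((n : ℝ) - k) ^ a), e1 (fun k => ((k:ℝ) * ((n : ℝ) - k) ^ a)^2),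
      e1 (fun k => (k:ℝ) * (((n : ℝ) - k) ^ a)^2), q'i, q'j, hx, hy]
    have hR : 0 ≤ ∑ k ∈ (Finset.univ.erase i).erase j, (q k:ℝ) * ((n : ℝ) - q k) ^ a := by
      apply Finset.sum_nonneg
      intro k _
      have : (q k : ℝ) < n := by exact_mod_cast lt_of_parts hχ2 q hq hs k
      exact mul_nonneg (by positivity) (Real.rpow_nonneg (by linarith) _)
    generalize ∑ k ∈ (Finset.univ.erase i).erase j, (q k:ℝ) * ((n : ℝ) - q k) ^ a = R at *
    generalize ∑ k ∈ (Finset.univ.erase i).erase j, ((q k:ℝ) * ((n : ℝ) - q k) ^ a)^2 = R2 at *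
    generalize ∑ k ∈ (Finset.univ.erase i).erase j, (q k:ℝ) * (((n : ℝ) - q k) ^ a)^2 = R3 at *
    have hN : (x:ℝ) + 1 < n := by rw [hx] at hqi; exact_mod_cast hqi
    have hxy' : (y:ℝ) + 1 ≤ x := by exact_mod_cast hxy
    have hy' : (1:ℝ) ≤ y := by exact_mod_cast hy1
    push_cast
    have hd : 0 < ((n:ℝ) - y)^a := Real.rpow_pos_of_pos (by linarith) _
    have hdd : ((n:ℝ) - y)^a ≤ ((n:ℝ) - (y+1))^a := Real.rpow_le_rpow_of_nonpos (by linarith) (by linarith) ha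
    have hdd' : a ≠ 0 → ((n:ℝ) - y)^a < ((n:ℝ) - (y+1))^a := fun h =>
      Real.rpow_lt_rpow_of_neg (by linarith) (by linarith) (lt_of_le_of_ne ha h)
    have hdc : ((n:ℝ) - (y+1))^a ≤ ((n:ℝ) - x)^a := Real.rpow_le_rpow_of_nonpos (by linarith) (by linarith) ha
    have hcd : ((n:ℝ) - x)^a * ((n:ℝ) - (y+1))^a ≤ ((n:ℝ) - (x+1))^a * ((n:ℝ) - y)^a := by
      rw [← Real.mul_rpow (by linarith) (by linarith), ← Real.mul_rpow (by linarith) (by linarith)]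
      apply Real.rpow_le_rpow_of_nonpos _ _ ha
      · exact mul_pos (by linarith) (by linarith)
      · nlinarith
    generalize ((n:ℝ) - y)^a = d at *
    generalize ((n:ℝ) - (y+1))^a = d' at *
    generalize ((n:ℝ) - x)^a = c' at *
    generalize ((n:ℝ) - (x+1))^a = c at *
    have H := alg_h (x := (x:ℝ)+1) hy' (by linarith) hd hdd hdc hcd
    have K := alg_k (x := (x:ℝ)+1) hy' (by linarith) hd hdd hdc hcd
    obtain ⟨A, A'⟩ := alg_A (x := (x:ℝ)+1) hy' (by linarith) hd hdd hdc hcd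
    have H' := mul_nonneg hR (sub_nonneg.2 H)
    have K' := mul_nonneg (sub_nonneg.2 hB) (sub_nonneg.2 K.le)
    rcases hab with h | h
    · have := A' (hdd' h)
      nlinarith
    · have := mul_pos (sub_pos.2 (hB' h)) (sub_pos.2 K)
      nlinarith

lemma balanced_vals {χ n : ℕ} (hχ : 0 < χ) (q : Fin χ → ℕ) (hs : ∑ i, q i = n)
    (hbal : ∀ i j, q i ≤ q j + 1) :
    (∀ i, q i = n / χ ∨ q i = n / χ + 1) ∧
      (Finset.univ.filter (fun i => q i = n / χ + 1)).card = n % χ := by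
  obtain ⟨i0, -, h0⟩ := Finset.exists_min_image (Finset.univ : Finset (Fin χ)) q ⟨⟨0, hχ⟩, Finset.mem_univ _⟩
  have hv : ∀ i, q i = q i0 + if q i = q i0 + 1 then 1 else 0 := by
    intro i
    have := h0 i (Finset.mem_univ _)
    have := hbal i i0
    split_ifs <;> omega
  have hsum : n = χ * q i0 + (Finset.univ.filter (fun i => q i = q i0 + 1)).card := by
    rw [← hs, Finset.sum_congr rfl (fun i _ => hv i), Finset.sum_add_distrib]
    simp
  have hlt : (Finset.univ.filter (fun i => q i = q i0 + 1)).card < χ := by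
    conv_rhs => rw [← Fintype.card_fin χ]
    apply Finset.card_lt_univ_of_notMem (x := i0)
    simp
  have hdiv : n / χ = q i0 := by
    rw [hsum, Nat.mul_add_div hχ, Nat.div_eq_of_lt hlt, add_zero]
  have hmod : n % χ = (Finset.univ.filter (fun i => q i = q i0 + 1)).card := by
    conv_lhs => rw [hsum, Nat.mul_add_mod, Nat.mod_eq_of_lt hlt]
  rw [hdiv, hmod]
  refine ⟨fun i => ?_, rfl⟩
  have := h0 i (Finset.mem_univ _)
  have := hbal i i0
  omega

lemma exists_perm {χ n : ℕ} (hχ : 0 < χ) (p q : Fin χ → ℕ) (hp : ∑ i, p i = n) (hq : ∑ i, q i = n)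
    (hpb : ∀ i j, p i ≤ p j + 1) (hqb : ∀ i j, q i ≤ q j + 1) :
    ∃ σ : Fin χ ≃ Fin χ, ∀ i, q i = p (σ i) := by
  obtain ⟨p1, p2⟩ := balanced_vals hχ p hp hpb
  obtain ⟨q1, q2⟩ := balanced_vals hχ q hq hqb
  have key : ∀ c, Fintype.card {i // q i = c} = Fintype.card {i // p i = c} := by
    intro c
    rw [Fintype.card_subtype, Fintype.card_subtype]
    by_cases h1 : c = n / χ + 1
    · rw [h1, p2, q2]
    by_cases h2 : c = n / χ
    · have aux : ∀ r : Fin χ → ℕ, (∀ i, r i = n / χ ∨ r i = n / χ + 1) → 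
          Finset.univ.filter (fun i => r i = c) = (Finset.univ.filter (fun i => r i = n / χ + 1))ᶜ := by
        intro r hr
        ext i
        have := hr i
        simp
        omega
      rw [aux q q1, aux p p1, Finset.card_compl, Finset.card_compl, p2, q2]
    · have aux : ∀ r : Fin χ → ℕ, (∀ i, r i = n / χ ∨ r i = n / χ + 1) → 
          Finset.univ.filter (fun i => r i = c) = ∅ := by
        intro r hr
        ext i
        have := hr i
        simp
        omega
      rw [aux q q1, aux p p1]
  refine ⟨Equiv.ofFiberEquiv (f := q) (g := p) (fun c => Fintype.equivOfCardEq (key c)), fun i => ?_⟩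
  exact (Equiv.ofFiberEquiv_map _ i).symm

lemma Phi_min {χ n : ℕ} (hχ2 : 2 ≤ χ) (a b : ℝ) (ha : a ≤ 0) (hb : 0 ≤ b) (hab : a ≠ 0 ∨ b ≠ 0)
    (p : Fin χ → ℕ) (hp : ∑ i, p i = n) (hpb : ∀ i j, p i ≤ p j + 1) :
    ∀ (m : ℕ) (q : Fin χ → ℕ), ∑ i, (q i)^2 = m → (∀ i, 1 ≤ q i) → ∑ i, q i = n →
     (∃ σ : Fin χ ≃ Fin χ, ∀ i, q i = p (σ i)) ∨ Phi n a ((2:ℝ)^b) p < Phi n a ((2:ℝ)^b) q := by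
  intro m
  induction m using Nat.strong_induction_on with
  | _ m ih =>
    intro q hm hq hs
    by_cases hqb : ∀ i j, q i ≤ q j + 1
    · exact Or.inl (exists_perm (by omega) p q hp hs hpb hqb)
    · right
      push Not at hqb
      obtain ⟨i, j, hij⟩ := hqb
      obtain ⟨q', h1, h2, h3, h4⟩ := transfer hχ2 a b ha hb hab q hq hs i j (by omega)
      rcases ih _ (hm ▸ h3) q' rfl h1 h2 with ⟨σ, hσ⟩ | h
      · refine lt_of_eq_of_lt ?_ h4
        have e : q' = fun i => p (σ i) := funext hσ
        subst e
        unfold Phi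
        rw [Equiv.sum_comp σ (fun i => (p i : ℝ) * ((n : ℝ) - p i) ^ a),
          Equiv.sum_comp σ (fun i => ((p i : ℝ) * ((n : ℝ) - p i) ^ a)^2),
          Equiv.sum_comp σ (fun i => (p i : ℝ) * (((n : ℝ) - p i) ^ a)^2)]
      · exact h.trans h4

lemma two_sum_sym2 {V : Type*} [Fintype V] (F : Sym2 V → ℝ) :
    2 * ∑ e ∈ Finset.univ.filter (fun e : Sym2 V => ¬ e.IsDiag), F e
      = ∑ u : V, ∑ v : V, if u = v then 0 else F s(u, v) := by
  rw [← Fintype.sum_prod_type' (fun u v => if u = v then 0 else F s(u, v))]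
  have h1 : ∑ x : V × V, (if x.1 = x.2 then 0 else F s(x.1, x.2))
      = ∑ x ∈ Finset.univ.filter (fun x : V × V => x.1 ≠ x.2), F s(x.1, x.2) := by
    rw [Finset.sum_filter]
    apply Finset.sum_congr rfl
    intro x _
    by_cases h : x.1 = x.2 <;> simp [h]
  rw [h1, ← Finset.sum_fiberwise_of_maps_to (g := fun x : V × V => s(x.1, x.2))
    (t := Finset.univ.filter (fun e : Sym2 V => ¬ e.IsDiag)) (by intro x hx; simpa using hx), Finset.mul_sum]
  apply Finset.sum_congr rfl
  intro e he
  induction e using Sym2.ind with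
  | _ u v =>
    have huv : u ≠ v := by simpa using he
    have : (Finset.univ.filter (fun x : V × V => x.1 ≠ x.2)).filter (fun x => s(x.1, x.2) = s(u, v))
        = {(u, v), (v, u)} := by
      ext ⟨x, y⟩
      simp only [Finset.mem_filter, Finset.mem_univ, true_and, Sym2.eq_iff, Finset.mem_insert,
        Finset.mem_singleton, Prod.mk.injEq]
      constructor
      · exact fun h => h.2
      · rintro (⟨rfl, rfl⟩ | ⟨rfl, rfl⟩)
        · exact ⟨huv, Or.inl ⟨rfl, rfl⟩⟩
        · exact ⟨huv.symm, Or.inr ⟨rfl, rfl⟩⟩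
    rw [this, Finset.sum_pair (by simp [huv])]
    rw [Sym2.eq_swap (a := v)]
    ring

lemma two_gut {V : Type*} [Fintype V] (G : SimpleGraph V) (a b : ℝ) :
    2 * gut G a b = ∑ u : V, ∑ v : V, if u = v then 0 else
      ((G.degree u : ℝ) * (G.degree v : ℝ)) ^ a * ((G.dist u v : ℝ)) ^ b := by
  unfold gut
  rw [two_sum_sym2]
  rfl

lemma iso_dist {V W : Type*} {G : SimpleGraph V} {H : SimpleGraph W} (hG : G.Connected)
    (e : G ≃g H) (u v : V) : H.dist (e u) (e v) = G.dist u v := by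
  have hH : H.Connected := e.connected_iff.1 hG
  apply le_antisymm
  · obtain ⟨w, hw⟩ := hG.exists_walk_length_eq_dist u v
    have := SimpleGraph.dist_le (w.map e.toHom)
    rw [SimpleGraph.Walk.length_map, hw] at this
    exact this
  · obtain ⟨w, hw⟩ := hH.exists_walk_length_eq_dist (e u) (e v)
    have := SimpleGraph.dist_le (w.map e.symm.toHom)
    rw [SimpleGraph.Walk.length_map, hw] at this
    simpa using this

lemma gut_iso {V W : Type*} [Fintype V] [Fintype W] {G : SimpleGraph V} {H : SimpleGraph W}
    (hG : G.Connected) (e : G ≃g H) (a b : ℝ) : gut G a b = gut H a b := by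
  have : 2 * gut G a b = 2 * gut H a b := by
    rw [two_gut, two_gut, ← e.toEquiv.sum_comp]
    apply Finset.sum_congr rfl
    intro u _
    rw [← e.toEquiv.sum_comp]
    apply Finset.sum_congr rfl
    intro v _
    have h1 : H.dist (e.toEquiv u) (e.toEquiv v) = G.dist u v := iso_dist hG e u v
    have h2 : ∀ u, H.degree (e.toEquiv u) = G.degree u := fun u => e.degree_eq u
    rw [h1, h2, h2]
    simp
  linarith

lemma gut_mono {V : Type*} [Fintype V] [Nontrivial V] {G H : SimpleGraph V} (hG : G.Connected) (hle : G ≤ H)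
    (a b : ℝ) (ha : a ≤ 0) (hb : 0 ≤ b) (hab : a ≠ 0 ∨ b ≠ 0) :
    gut H a b ≤ gut G a b ∧ (gut G a b = gut H a b → G = H) := by
  have hH : H.Connected := hG.mono hle
  have hGd : ∀ u, 0 < G.degree u := fun u => hG.preconnected.degree_pos_of_nontrivial u
  have hd : ∀ u, G.degree u ≤ H.degree u := fun u => SimpleGraph.degree_le_of_le hle
  have hGd' : ∀ u, (0:ℝ) < G.degree u := fun u => by exact_mod_cast hGd u
  have hd' : ∀ u, (G.degree u : ℝ) ≤ H.degree u := fun u => by exact_mod_cast hd u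
  have hA : ∀ u v, ((H.degree u : ℝ) * H.degree v) ^ a ≤ ((G.degree u : ℝ) * G.degree v) ^ a := fun u v =>
    Real.rpow_le_rpow_of_nonpos (mul_pos (hGd' u) (hGd' v))
      (mul_le_mul (hd' u) (hd' v) (hGd' v).le (by positivity)) ha
  have hD : ∀ u v, (H.dist u v : ℝ) ≤ G.dist u v := fun u v => by
    exact_mod_cast (hG.preconnected u v).dist_anti hle
  have hB : ∀ u v, (H.dist u v : ℝ) ^ b ≤ (G.dist u v : ℝ) ^ b := fun u v =>
    Real.rpow_le_rpow (by positivity) (hD u v) hb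
  have hApos : ∀ u v, 0 < ((H.degree u : ℝ) * H.degree v) ^ a := fun u v =>
    Real.rpow_pos_of_pos (mul_pos ((hGd' u).trans_le (hd' u)) ((hGd' v).trans_le (hd' v))) _
  have hT : ∀ u v, (if u = v then 0 else ((H.degree u : ℝ) * H.degree v) ^ a * (H.dist u v : ℝ) ^ b) ≤
      (if u = v then 0 else ((G.degree u : ℝ) * G.degree v) ^ a * (G.dist u v : ℝ) ^ b) := by
    intro u v
    split_ifs
    · exact le_rfl
    · exact mul_le_mul (hA u v) (hB u v) (by positivity) (by positivity)
  have hle2 : 2 * gut H a b ≤ 2 * gut G a b := by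
    rw [two_gut, two_gut]
    exact Finset.sum_le_sum fun u _ => Finset.sum_le_sum fun v _ => hT u v
  refine ⟨by linarith, fun heq => ?_⟩
  by_contra hne
  have : ∃ u v, H.Adj u v ∧ ¬ G.Adj u v := by
    by_contra hcon
    push Not at hcon
    exact hne (le_antisymm hle (fun u v => hcon u v))
  obtain ⟨u, v, h1, h2⟩ := this
  have huv : u ≠ v := h1.ne
  have hlt : 2 * gut H a b < 2 * gut G a b := by
    rw [two_gut, two_gut]
    refine Finset.sum_lt_sum (fun u _ => Finset.sum_le_sum fun v _ => hT u v) ⟨u, Finset.mem_univ _, ?_⟩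
    refine Finset.sum_lt_sum (fun v _ => hT u v) ⟨v, Finset.mem_univ _, ?_⟩
    rw [if_neg huv, if_neg huv]
    have hDu : H.dist u v = 1 := SimpleGraph.dist_eq_one_iff_adj.2 h1
    have hDg : 1 < G.dist u v := hG.one_lt_dist_of_ne_of_not_adj huv h2
    have hDg' : (1:ℝ) < G.dist u v := by exact_mod_cast hDg
    have hBpos : 0 < (G.dist u v : ℝ) ^ b := Real.rpow_pos_of_pos (by linarith) _
    rcases hab with h | h
    · have hlt : G.degree u < H.degree u := by
        rw [← SimpleGraph.card_neighborFinset_eq_degree, ← SimpleGraph.card_neighborFinset_eq_degree]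
        apply Finset.card_lt_card
        rw [Finset.ssubset_iff_of_subset]
        · exact ⟨v, by simpa using h1, by simpa using h2⟩
        · intro w hw
          simp only [SimpleGraph.mem_neighborFinset] at hw ⊢
          exact hle hw
      have hlt' : (G.degree u : ℝ) < H.degree u := by exact_mod_cast hlt
      have : ((H.degree u : ℝ) * H.degree v) ^ a < ((G.degree u : ℝ) * G.degree v) ^ a :=
        Real.rpow_lt_rpow_of_neg (mul_pos (hGd' u) (hGd' v))
          (mul_lt_mul hlt' (hd' v) (hGd' v) (by positivity)) (lt_of_le_of_ne ha h)
      exact mul_lt_mul this (hB u v) (by rw [hDu]; simp) (by positivity)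
    · have : (H.dist u v : ℝ) ^ b < (G.dist u v : ℝ) ^ b := by
        apply Real.rpow_lt_rpow (by positivity) _ (lt_of_le_of_ne hb h.symm)
        rw [hDu]; simpa using hDg'
      exact mul_lt_mul' (hA u v) this (by positivity) ((hApos u v).trans_le (hA u v))
  linarith

abbrev CMP {χ : ℕ} (q : Fin χ → ℕ) := SimpleGraph.completeMultipartiteGraph (fun i => Fin (q i))

lemma CMP_adj {χ : ℕ} (q : Fin χ → ℕ) (u v : Σ i, Fin (q i)) : (CMP q).Adj u v ↔ u.1 ≠ v.1 := by
  simp [CMP]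

lemma CMP_connected {χ : ℕ} (hχ2 : 2 ≤ χ) (q : Fin χ → ℕ) (hq : ∀ i, 1 ≤ q i) : (CMP q).Connected := by
  have hnt : Nontrivial (Fin χ) := Fin.nontrivial_iff_two_le.2 hχ2
  have : Nonempty (Σ i, Fin (q i)) := ⟨⟨⟨0, by omega⟩, ⟨0, hq _⟩⟩⟩
  refine ⟨fun u v => ?_⟩
  by_cases h : u.1 = v.1
  · obtain ⟨j, hj⟩ := exists_ne u.1
    have h1 : (CMP q).Adj u ⟨j, ⟨0, hq _⟩⟩ := by rw [CMP_adj]; exact hj.symm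
    have h2 : (CMP q).Adj ⟨j, ⟨0, hq _⟩⟩ v := by rw [CMP_adj]; exact h ▸ hj
    exact h1.reachable.trans h2.reachable
  · exact ((CMP_adj q u v).2 h).reachable

lemma CMP_dist {χ : ℕ} (hχ2 : 2 ≤ χ) (q : Fin χ → ℕ) (hq : ∀ i, 1 ≤ q i) (u v : Σ i, Fin (q i)) (huv : u ≠ v) :
    (CMP q).dist u v = if u.1 = v.1 then 2 else 1 := by
  have hnt : Nontrivial (Fin χ) := Fin.nontrivial_iff_two_le.2 hχ2
  split_ifs with h
  · apply le_antisymm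
    · obtain ⟨j, hj⟩ := exists_ne u.1
      have h1 : (CMP q).Adj u ⟨j, ⟨0, hq _⟩⟩ := by rw [CMP_adj]; exact hj.symm
      have h2 : (CMP q).Adj ⟨j, ⟨0, hq _⟩⟩ v := by rw [CMP_adj]; exact h ▸ hj
      exact SimpleGraph.dist_le (SimpleGraph.Walk.cons h1 (SimpleGraph.Walk.cons h2 SimpleGraph.Walk.nil))
    · exact (CMP_connected hχ2 q hq).one_lt_dist_of_ne_of_not_adj huv (by rw [CMP_adj]; simpa using h)
  · exact SimpleGraph.dist_eq_one_iff_adj.2 ((CMP_adj q u v).2 h)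

lemma CMP_degree {χ n : ℕ} (q : Fin χ → ℕ) (hs : ∑ i, q i = n) (u : Σ i, Fin (q i)) :
    ((CMP q).degree u : ℝ) = (n : ℝ) - q u.1 := by
  have h1 : (CMP q).neighborFinset u = (Finset.univ.filter (fun v : Σ i, Fin (q i) => v.1 = u.1))ᶜ := by
    ext v
    simp only [SimpleGraph.mem_neighborFinset, CMP_adj, Finset.mem_compl, Finset.mem_filter,
      Finset.mem_univ, true_and]
    exact ne_comm
  have h2 : (Finset.univ.filter (fun v : Σ i, Fin (q i) => v.1 = u.1)).card = q u.1 := by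
    rw [Finset.card_filter, Fintype.sum_sigma]
    rw [Finset.sum_eq_single u.1]
    · simp
    · intro j _ hj
      simp [hj]
    · simp
  have h3 : (CMP q).degree u + q u.1 = n := by
    rw [← SimpleGraph.card_neighborFinset_eq_degree, h1, ← h2, Finset.card_compl_add_card]
    simp [hs]
  rw [← h3]
  push_cast
  ring

lemma two_gut_CMP {χ n : ℕ} (hχ2 : 2 ≤ χ) (q : Fin χ → ℕ) (hq : ∀ i, 1 ≤ q i) (hs : ∑ i, q i = n) (a b : ℝ) :
    2 * gut (CMP q) a b = Phi n a ((2:ℝ)^b) q := by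
  rw [two_gut]
  set f : Fin χ → ℝ := fun i => ((n:ℝ) - q i)^a with hf
  set B := (2:ℝ)^b with hB
  have hterm : ∀ u v : Σ i, Fin (q i), (if u = v then 0 else
      (((CMP q).degree u : ℝ) * ((CMP q).degree v : ℝ)) ^ a * (((CMP q).dist u v : ℝ)) ^ b)
      = f u.1 * f v.1 + (if u.1 = v.1 then (B - 1) * (f u.1)^2 else 0) - (if u = v then B * (f u.1)^2 else 0) := by
    intro u v
    have hnn : ∀ i, 0 ≤ (n:ℝ) - q i := fun i => by
      have : (q i : ℝ) < n := by exact_mod_cast lt_of_parts hχ2 q hq hs i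
      linarith
    by_cases huv : u = v
    · subst huv
      simp
      ring
    · rw [if_neg huv, if_neg huv, CMP_degree q hs, CMP_degree q hs, CMP_dist hχ2 q hq u v huv,
        Real.mul_rpow (hnn _) (hnn _)]
      by_cases h : u.1 = v.1
      · simp only [h, if_true, hf, hB]
        push_cast
        ring
      · simp [h, hf]
  refine (Finset.sum_congr rfl fun u _ => Finset.sum_congr rfl fun v _ =>
    (?_ : _ = f u.1 * f v.1 + (if u.1 = v.1 then (B - 1) * (f u.1)^2 else 0)
      - (if u = v then B * (f u.1)^2 else 0))).trans ?_
  · rw [← hterm u v]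
    congr!
  simp only [Finset.sum_sub_distrib, Finset.sum_add_distrib]
  have s1 : ∑ u : (Σ i, Fin (q i)), ∑ v : (Σ i, Fin (q i)), f u.1 * f v.1 = (∑ i, (q i : ℝ) * f i)^2 := by
    rw [← Finset.sum_mul_sum, Fintype.sum_sigma]
    simp [sq]
  have s2 : ∑ u : (Σ i, Fin (q i)), ∑ v : (Σ i, Fin (q i)), (if u.1 = v.1 then (B - 1) * (f u.1)^2 else 0)
      = (B - 1) * ∑ i, ((q i : ℝ) * f i)^2 := by
    have inner : ∀ u : (Σ i, Fin (q i)), ∑ v : (Σ i, Fin (q i)),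
        (if u.1 = v.1 then (B - 1) * (f u.1)^2 else 0) = q u.1 * ((B - 1) * (f u.1)^2) := by
      intro u
      rw [Fintype.sum_sigma, Finset.sum_eq_single u.1]
      · simp
      · intro j _ hj
        simp [hj.symm]
      · simp
    simp only [inner]
    rw [Fintype.sum_sigma, Finset.mul_sum]
    apply Finset.sum_congr rfl
    intro i _
    simp
    ring
  have s3 : ∑ u : (Σ i, Fin (q i)), ∑ v : (Σ i, Fin (q i)), (if u = v then B * (f u.1)^2 else 0)
      = B * ∑ i, (q i : ℝ) * (f i)^2 := by
    simp only [Finset.sum_ite_eq, Finset.mem_univ, if_true]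
    rw [Fintype.sum_sigma, Finset.mul_sum]
    apply Finset.sum_congr rfl
    intro i _
    simp
    ring
  rw [s1, s2, s3]
  rfl

lemma CMP_iso {χ : ℕ} (p q : Fin χ → ℕ) (σ : Fin χ ≃ Fin χ) (h : ∀ i, q i = p (σ i)) :
    Nonempty (CMP q ≃g CMP p) := by
  obtain rfl : q = fun i => p (σ i) := funext h
  refine ⟨⟨Equiv.sigmaCongrLeft (β := fun i => Fin (p i)) σ, ?_⟩⟩
  intro u v
  rw [CMP_adj, CMP_adj]
  simp [Equiv.sigmaCongrLeft]

theorem stmt8 {V : Type*} [Fintype V] (G : SimpleGraph V) (n : ℕ)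
    (hn : n = Fintype.card V) (hG : G.Connected)
    (a b : ℝ) (ha : a ≤ 0) (hb : 0 ≤ b) (hab : a ≠ 0 ∨ b ≠ 0)
    (χ : ℕ) (hχ : G.chromaticNumber = χ) (hχ2 : 2 ≤ χ) (hχn : χ ≤ n)
    (p : Fin χ → ℕ) (hsum : ∑ i, p i = n)
    (hbal : ∀ i j, |(p i : ℤ) - (p j : ℤ)| ≤ 1) :
    gut (SimpleGraph.completeMultipartiteGraph (fun i => Fin (p i))) a b ≤ gut G a b ∧
    (gut G a b = gut (SimpleGraph.completeMultipartiteGraph (fun i => Fin (p i))) a b ↔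
      Nonempty (G ≃g SimpleGraph.completeMultipartiteGraph (fun i => Fin (p i)))) := by
  have hpb : ∀ i j, p i ≤ p j + 1 := by
    intro i j
    have := (abs_le.1 (hbal i j)).2
    omega
  have hp1 : ∀ i, 1 ≤ p i := by
    intro i
    by_contra h
    have hi : p i = 0 := by omega
    have : ∑ j, p j < ∑ j : Fin χ, 1 := by
      refine Finset.sum_lt_sum (fun j _ => ?_) ⟨i, Finset.mem_univ _, by omega⟩
      have := hpb j i
      omega
    simp at this
    omega
  have hcol : G.Colorable χ := SimpleGraph.chromaticNumber_le_iff_colorable.1 hχ.le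
  obtain ⟨C⟩ := hcol
  have hC : Function.Surjective C := SimpleGraph.le_chromaticNumber_iff_forall_surjective.1 hχ.ge C
  set q : Fin χ → ℕ := fun i => Fintype.card {v // C v = i} with hqdef
  have hq1 : ∀ i, 1 ≤ q i := fun i => by
    obtain ⟨v, hv⟩ := hC i
    exact Fintype.card_pos_iff.2 ⟨⟨v, hv⟩⟩
  let e : V ≃ Σ i, Fin (q i) :=
    (Equiv.sigmaFiberEquiv C).symm.trans (Equiv.sigmaCongrRight fun i => Fintype.equivFin _)
  have he : ∀ v, (e v).1 = C v := fun v => rfl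
  have hqs : ∑ i, q i = n := by
    rw [hn, Fintype.card_congr e]
    simp
  let G' : SimpleGraph (Σ i, Fin (q i)) := G.comap e.symm
  have iso : G ≃g G' := (SimpleGraph.Iso.comap e.symm G).symm
  have hG' : G'.Connected := iso.connected_iff.1 hG
  have hle : G' ≤ CMP q := by
    intro u v huv
    have h1 : G.Adj (e.symm u) (e.symm v) := huv
    have h2 := C.valid h1
    rw [CMP_adj]
    rw [← he, ← he] at h2
    simpa using h2
  have hnt : Nontrivial (Σ i, Fin (q i)) := by
    rw [← Fintype.one_lt_card_iff_nontrivial, ← Fintype.card_congr e]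
    omega
  obtain ⟨m1, m2⟩ := gut_mono hG' hle a b ha hb hab
  have hgg := gut_iso hG iso a b
  have t1 := two_gut_CMP hχ2 q hq1 hqs a b
  have t2 := two_gut_CMP hχ2 p hp1 hsum a b
  have hmin := Phi_min hχ2 a b ha hb hab p hsum hpb _ q rfl hq1 hqs
  have hmin' : (∃ σ : Fin χ ≃ Fin χ, ∀ i, q i = p (σ i)) ∨ gut (CMP p) a b < gut (CMP q) a b := by
    rcases hmin with h | h
    · exact Or.inl h
    · right; linarith
  have hle' : gut (CMP p) a b ≤ gut (CMP q) a b := by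
    rcases hmin' with ⟨σ, hσ⟩ | h
    · obtain ⟨i⟩ := CMP_iso p q σ hσ
      exact (gut_iso (CMP_connected hχ2 q hq1) i a b).ge
    · exact h.le
  refine ⟨by linarith, fun heq => ?_, fun ⟨i⟩ => gut_iso hG i a b⟩
  rcases hmin' with ⟨σ, hσ⟩ | h
  · obtain ⟨i⟩ := CMP_iso p q σ hσ
    have hGK : G' = CMP q := m2 (by linarith)
    rw [hGK] at iso
    exact ⟨iso.trans i⟩
  · exfalso; linarith
end

section
/- Let n ≥ 2 and m be positive integers with m ≥ n(n−1)/4, and suppose there exists a simple graph with n vertices and m edges. Let f(n,m) = max{ Σ_{u∈V(G)} d(u)^2 : G a simple graph with n vertices and m edges }. Then m·√(8m+1) − 3m ≤ f(n,m) ≤ m·√(8m+1) − m. -/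
open scoped Classical

/-- `fmax n m` is the maximum of `Σ_{u ∈ V(G)} d(u)²` over all simple graphs `G`
with `n` vertices and `m` edges. -/
noncomputable def fmax (n m : ℕ) : ℕ :=
  sSup {k : ℕ | ∃ G : SimpleGraph (Fin n),
    G.edgeFinset.card = m ∧ ∑ v, G.degree v ^ 2 = k}



/-- the continuous clique bound -/
noncomputable def FF (y : ℝ) : ℝ := y * Real.sqrt (8 * y + 1) - y

/-- the complementary bound on `n` vertices -/
noncomputable def FB (n y : ℝ) : ℝ := FF (n * (n - 1) / 2 - y) + 4 * y * (n - 1) - n * (n - 1) ^ 2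

/-- real-valued degree -/
noncomputable def DG {n : ℕ} (G : SimpleGraph (Fin n)) (v : Fin n) : ℝ := ∑ w, if G.Adj v w then (1 : ℝ) else 0

lemma sqle {x y : ℝ} (h : x ^ 2 ≤ y ^ 2) (hy : 0 ≤ y) : x ≤ y := by
  by_contra hc
  nlinarith

lemma FF_param (y s : ℝ) (hs : 0 ≤ s) (h : s ^ 2 = 8 * y + 1) :
    FF y = (s ^ 2 - 1) * (s - 1) / 8 := by
  have : Real.sqrt (8 * y + 1) = s := by rw [← h]; exact Real.sqrt_sq hs
  unfold FF
  rw [this]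
  have : y = (s ^ 2 - 1) / 8 := by linarith
  rw [this]; ring

lemma exists_param (y : ℝ) (hy : 0 ≤ y) : ∃ s : ℝ, 1 ≤ s ∧ s ^ 2 = 8 * y + 1 := by
  refine ⟨Real.sqrt (8 * y + 1), ?_, Real.sq_sqrt (by linarith)⟩
  rw [Real.one_le_sqrt]; linarith

lemma lemB (n y : ℝ) (hn : 1 ≤ n) (h1 : n * (n - 1) / 4 ≤ y) (h2 : y ≤ n * (n - 1) / 2) :
    FB n y ≤ FF y := by
  have hy : 0 ≤ y := le_trans (by nlinarith) h1
  obtain ⟨s, hs1, hs⟩ := exists_param y hy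
  obtain ⟨t, ht1, ht⟩ := exists_param (n * (n - 1) / 2 - y) (by linarith)
  unfold FB
  rw [FF_param _ s (by linarith) hs, FF_param _ t (by linarith) ht]
  obtain ⟨a, rfl⟩ : ∃ a, n = (a + 1) / 2 := ⟨2 * n - 1, by ring⟩
  have hy' : y = (s ^ 2 - 1) / 8 := by linarith
  subst hy'
  have hst : s ^ 2 + t ^ 2 = a ^ 2 + 1 := by linarith
  have hts : t ≤ s := by
    apply sqle _ (by linarith)
    nlinarith
  have has : s ≤ a := by
    apply sqle _ (by linarith)
    nlinarith
  have key : 0 ≤ (s - t) * ((a - s) * (a - t)) :=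
    mul_nonneg (by linarith) (mul_nonneg (by linarith) (by linarith))
  have e : (s ^ 2 - 1) * (s - 1) - ((t ^ 2 - 1) * (t - 1) + 2 * (s ^ 2 - 1) * (a - 1)
      - (a ^ 2 - 1) * (a - 1)) = (s - t) * ((a - s) * (a - t)) := by
    have : a ^ 2 = s ^ 2 + t ^ 2 - 1 := by linarith
    linear_combination (s - 1 - s + t  + a - t) * this * 0 + (a - 1) * this - (s - t) * this
  nlinarith

lemma lemC (n y : ℝ) (hn : 2 ≤ n) (h0 : 0 ≤ y) (h2 : y ≤ (n - 1) * (n - 2) / 4) :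
    FB (n - 1) y ≤ FB n y := by
  have hp : 0 ≤ (n - 1) * (n - 2) := mul_nonneg (by linarith) (by linarith)
  obtain ⟨t, ht1, ht⟩ := exists_param (n * (n - 1) / 2 - y) (by nlinarith)
  obtain ⟨u, hu1, hu⟩ := exists_param ((n - 1) * (n - 1 - 1) / 2 - y) (by nlinarith)
  unfold FB
  rw [FF_param _ u (by linarith) hu, FF_param _ t (by linarith) ht]
  obtain ⟨b, rfl⟩ : ∃ b, n = (b + 2) / 2 := ⟨2 * n - 2, by ring⟩
  have hy' : y = ((b + 1) ^ 2 - t ^ 2) / 8 := by linarith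
  have hut : t ^ 2 = u ^ 2 + 4 * b := by linarith
  have hta : t ≤ b + 1 := by
    apply sqle _ (by linarith)
    nlinarith
  have hua : u ≤ b - 1 := by
    apply sqle _ (by nlinarith)
    nlinarith
  have hsb : b ≤ t + u := by
    apply sqle _ (by linarith)
    nlinarith
  have hd2 : 2 ≤ t - u := by
    by_contra hc
    nlinarith
  have hd4 : t - u ≤ 4 := by
    by_contra hc
    nlinarith
  have key : 0 ≤ (t - u - 2) * ((4 - (t - u)) * ((t + u) ^ 2 - 2 * (t - u + 2))) :=
    mul_nonneg (by linarith) (mul_nonneg (by linarith) (by nlinarith))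
  have hb : b = (t ^ 2 - u ^ 2) / 4 := by linarith
  subst hy'
  subst hb
  nlinarith

lemma DG_compl {n : ℕ} (G : SimpleGraph (Fin n)) (v : Fin n) :
    DG Gᶜ v = n - 1 - DG G v := by
  unfold DG
  calc _ = ∑ w, ((1 : ℝ) - (if v = w then 1 else 0) - (if G.Adj v w then 1 else 0)) := by
        apply Finset.sum_congr rfl
        intro w _
        by_cases h : v = w
        · subst h; simp
        · by_cases h' : G.Adj v w <;> simp [h, h', SimpleGraph.compl_adj]
    _ = _ := by
        rw [Finset.sum_sub_distrib, Finset.sum_sub_distrib]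
        simp

/-- move the edge `vw` to `uw` -/
noncomputable def mv {n : ℕ} (G : SimpleGraph (Fin n)) (u v w : Fin n) : SimpleGraph (Fin n) where
  Adj x y := x ≠ y ∧ ((G.Adj x y ∧ ¬ (x = v ∧ y = w) ∧ ¬ (x = w ∧ y = v)) ∨
    (x = u ∧ y = w) ∨ (x = w ∧ y = u))
  symm := ⟨by
    rintro x y ⟨h0, h⟩
    refine ⟨h0.symm, ?_⟩
    rw [G.adj_comm y x]
    tauto⟩
  loopless := ⟨fun x h => h.1 rfl⟩

lemma DG_mv {n : ℕ} (G : SimpleGraph (Fin n)) (u v w : Fin n) (huv : u ≠ v) (huw : u ≠ w)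
    (h1 : G.Adj v w) (h2 : ¬ G.Adj u w) (x : Fin n) :
    DG (mv G u v w) x = DG G x + (if x = u then 1 else 0) - (if x = v then 1 else 0) := by
  unfold DG
  have hvw := h1.ne
  have h2' : ¬ G.Adj w u := fun h => h2 h.symm
  have h : ∀ y, (if (mv G u v w).Adj x y then (1 : ℝ) else 0)
      = (if G.Adj x y then 1 else 0) + (if y = w then (if x = u then 1 else 0) else 0)
        + (if y = u then (if x = w then 1 else 0) else 0)
        - (if y = w then (if x = v then 1 else 0) else 0)
        - (if y = v then (if x = w then 1 else 0) else 0) := by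
    intro y
    simp only [mv]
    by_cases hxu : x = u
    · subst hxu
      by_cases hyw : y = w
      · subst hyw; simp [*]
      · simp [hyw, huw, huv]
        congr 1
        apply propext
        exact ⟨fun h => h.2, fun h => ⟨h.ne, h⟩⟩
    by_cases hxv : x = v
    · subst hxv
      by_cases hyw : y = w
      · subst hyw; simp [*]
      · simp [hyw, hvw, hxu]
        congr 1
        apply propext
        exact ⟨fun h => h.2, fun h => ⟨h.ne, h⟩⟩
    by_cases hxw : x = w
    · subst hxw
      by_cases hyu : y = u
      · subst hyu; simp [*]
      by_cases hyv : y = v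
      · subst hyv; simp [*, h1.symm]
      · simp [*]
        congr 1
        apply propext
        exact ⟨fun h => h.2, fun h => ⟨h.ne, h⟩⟩
    simp [*]
    congr 1
    apply propext
    exact ⟨fun h => h.2, fun h => ⟨h.ne, h⟩⟩
  rw [Finset.sum_congr rfl fun w _ => h w]
  simp only [Finset.sum_sub_distrib, Finset.sum_add_distrib]
  simp
  ring

lemma sum_mv {n : ℕ} (G : SimpleGraph (Fin n)) (u v w : Fin n) (huv : u ≠ v) (huw : u ≠ w)
    (h1 : G.Adj v w) (h2 : ¬ G.Adj u w) :
    ∑ x, DG (mv G u v w) x = ∑ x, DG G x := by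
  rw [Finset.sum_congr rfl fun x _ => DG_mv G u v w huv huw h1 h2 x]
  simp only [Finset.sum_sub_distrib, Finset.sum_add_distrib]
  simp

lemma sumsq_mv {n : ℕ} (G : SimpleGraph (Fin n)) (u v w : Fin n) (huv : u ≠ v) (huw : u ≠ w)
    (h1 : G.Adj v w) (h2 : ¬ G.Adj u w) :
    ∑ x, DG (mv G u v w) x ^ 2 = ∑ x, DG G x ^ 2 + 2 * (DG G u - DG G v) + 2 := by
  have h : ∀ x, DG (mv G u v w) x ^ 2 = DG G x ^ 2
      + (if x = u then 2 * DG G x + 1 else 0) - (if x = v then 2 * DG G x - 1 else 0) := by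
    intro x
    rw [DG_mv G u v w huv huw h1 h2 x]
    by_cases hxu : x = u
    · subst hxu; simp [huv]; ring
    by_cases hxv : x = v
    · subst hxv; simp [hxu]; ring
    simp [*]
  rw [Finset.sum_congr rfl fun x _ => h x]
  simp only [Finset.sum_sub_distrib, Finset.sum_add_distrib]
  simp
  ring

lemma max_struct {n : ℕ} (hn : 0 < n) (G : SimpleGraph (Fin n))
    (hmax : ∀ H : SimpleGraph (Fin n), ∑ x, DG H x = ∑ x, DG G x →
      ∑ x, DG H x ^ 2 ≤ ∑ x, DG G x ^ 2) :
    (∃ w, ∀ x, ¬ G.Adj w x) ∨ (∃ w, ∀ x, ¬ Gᶜ.Adj w x) := by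
  have : Nonempty (Fin n) := ⟨⟨0, hn⟩⟩
  obtain ⟨u, hu⟩ := Finite.exists_max (DG G)
  by_cases hd : ∃ w, w ≠ u ∧ ¬ G.Adj u w
  · obtain ⟨w, hwu, hw⟩ := hd
    left
    refine ⟨w, fun v hv => ?_⟩
    have huv : u ≠ v := by
      rintro rfl
      exact hw hv.symm
    have e1 := sum_mv G u v w huv hwu.symm hv.symm hw
    have e2 := sumsq_mv G u v w huv hwu.symm hv.symm hw
    have := hmax _ e1
    have := hu v
    linarith
  · right
    refine ⟨u, fun x hx => ?_⟩
    rw [SimpleGraph.compl_adj] at hx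
    exact hd ⟨x, hx.1.symm, hx.2⟩

lemma DG_nonneg {n : ℕ} (G : SimpleGraph (Fin n)) (v : Fin n) : 0 ≤ DG G v :=
  Finset.sum_nonneg fun w _ => by split_ifs <;> norm_num

lemma DG_iso {n : ℕ} (G : SimpleGraph (Fin (n + 1))) (w : Fin (n + 1))
    (hw : ∀ x, ¬ G.Adj w x) : DG G w = 0 := by
  simp [DG, hw]

lemma DG_restrict {n : ℕ} (G : SimpleGraph (Fin (n + 1))) (w : Fin (n + 1))
    (hw : ∀ x, ¬ G.Adj w x) (v : Fin n) :
    DG (G.comap w.succAbove) v = DG G (w.succAbove v) := by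
  unfold DG
  rw [Fin.sum_univ_succAbove _ w]
  have : ¬ G.Adj (w.succAbove v) w := fun h => hw _ h.symm
  simp [this]

lemma FF_zero : FF 0 = 0 := by simp [FF]

lemma sumDG_le {n : ℕ} (G : SimpleGraph (Fin n)) : ∑ x, DG G x ≤ n * (n - 1) := by
  have : ∀ x ∈ Finset.univ, DG G x ≤ (n : ℝ) - 1 := by
    intro x _
    have := DG_compl G x
    have := DG_nonneg Gᶜ x
    linarith
  have h := Finset.sum_le_sum this
  simp only [Finset.sum_const, Finset.card_univ, Fintype.card_fin, nsmul_eq_mul] at h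
  exact h

lemma sumDG_compl {n : ℕ} (G : SimpleGraph (Fin n)) :
    ∑ x, DG Gᶜ x = n * (n - 1) - ∑ x, DG G x := by
  simp only [DG_compl, Finset.sum_sub_distrib]
  simp
  ring

lemma sumsqDG_compl {n : ℕ} (G : SimpleGraph (Fin n)) :
    ∑ x, DG Gᶜ x ^ 2 = n * (n - 1) ^ 2 - 2 * (n - 1) * ∑ x, DG G x + ∑ x, DG G x ^ 2 := by
  have : ∀ x, DG Gᶜ x ^ 2 = (n - 1) ^ 2 - 2 * (n - 1) * DG G x + DG G x ^ 2 := by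
    intro x; rw [DG_compl]; ring
  rw [Finset.sum_congr rfl fun x _ => this x]
  simp only [Finset.sum_sub_distrib, Finset.sum_add_distrib, ← Finset.mul_sum]
  simp

lemma main_upper (n : ℕ) : ∀ G : SimpleGraph (Fin n),
    ∑ x, DG G x ^ 2 ≤ max (FF ((∑ x, DG G x) / 2)) (FB n ((∑ x, DG G x) / 2)) := by
  induction n with
  | zero => intro G; simp [FF_zero]
  | succ n ih =>
    rcases Nat.eq_zero_or_pos n with rfl | hnpos
    · intro G
      have : ∀ x, DG G x = 0 := by
        intro x; apply DG_iso
        intro y h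
        exact h.ne (Fin.ext (by omega))
      simp [this, FF_zero]
    -- the case of an isolated vertex
    have iso : ∀ G : SimpleGraph (Fin (n + 1)), (∃ w, ∀ x, ¬ G.Adj w x) →
        ∑ x, DG G x ^ 2 ≤
          max (FF ((∑ x, DG G x) / 2)) (FB ((n + 1 : ℕ) : ℝ) ((∑ x, DG G x) / 2)) := by
      rintro G ⟨w, hw⟩
      have h := ih (G.comap w.succAbove)
      have hle := sumDG_le (G.comap w.succAbove)
      have h0 : 0 ≤ ∑ x, DG (G.comap w.succAbove) x :=
        Finset.sum_nonneg fun x _ => DG_nonneg _ x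
      have e1 : ∑ x, DG (G.comap w.succAbove) x = ∑ x, DG G x := by
        rw [Fin.sum_univ_succAbove _ w, DG_iso G w hw]
        simp [DG_restrict G w hw]
      have e2 : ∑ x, DG (G.comap w.succAbove) x ^ 2 = ∑ x, DG G x ^ 2 := by
        rw [Fin.sum_univ_succAbove _ w, DG_iso G w hw]
        simp [DG_restrict G w hw]
      rw [e2, e1] at h
      rw [e1] at hle h0
      have hn1 : (1 : ℝ) ≤ n := by exact_mod_cast hnpos
      refine h.trans (max_le (le_max_left _ _) ?_)
      rcases le_total ((n : ℝ) * (n - 1) / 4) ((∑ x, DG G x) / 2) with hc | hc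
      · exact (lemB n _ hn1 hc (by linarith)).trans (le_max_left _ _)
      · have := lemC (n + 1 : ℝ) ((∑ x, DG G x) / 2) (by linarith) (by linarith)
          (by ring_nf; ring_nf at hc; linarith)
        rw [add_sub_cancel_right] at this
        push_cast
        exact this.trans (le_max_right _ _)
    intro G
    -- pass to a maximiser
    obtain ⟨M, hM, hMmax⟩ := Set.exists_max_image
      {H : SimpleGraph (Fin (n + 1)) | ∑ x, DG H x = ∑ x, DG G x} (fun H => ∑ x, DG H x ^ 2)
      (Set.toFinite _) ⟨G, rfl⟩
    have hM' : ∑ x, DG M x = ∑ x, DG G x := hM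
    refine (hMmax G rfl).trans ?_
    rw [← hM']
    have hmax : ∀ H : SimpleGraph (Fin (n + 1)), ∑ x, DG H x = ∑ x, DG M x →
      ∑ x, DG H x ^ 2 ≤ ∑ x, DG M x ^ 2 := fun H hH => hMmax H (hH.trans hM')
    rcases max_struct (Nat.succ_pos n) M hmax with h | h
    · exact iso M h
    · have h3 := iso Mᶜ h
      rw [sumDG_compl, sumsqDG_compl] at h3
      generalize ((n + 1 : ℕ) : ℝ) = N at *
      generalize ∑ x, DG M x = S at *
      have a1 : FF ((N * (N - 1) - S) / 2) = FB N (S / 2) - 2 * S * (N - 1) + N * (N - 1) ^ 2 := by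
        unfold FB; ring_nf
      have a2 : FB N ((N * (N - 1) - S) / 2) = FF (S / 2) - 2 * S * (N - 1) + N * (N - 1) ^ 2 := by
        unfold FB
        have : N * (N - 1) / 2 - (N * (N - 1) - S) / 2 = S / 2 := by ring
        rw [this]; ring
      rw [a1, a2] at h3
      rcases le_max_iff.1 h3 with h4 | h4
      · exact le_max_of_le_right (by linarith)
      · exact le_max_of_le_left (by linarith)

lemma DG_eq {n : ℕ} (G : SimpleGraph (Fin n)) (v : Fin n) : DG G v = G.degree v := by
  unfold DG
  rw [← SimpleGraph.card_neighborFinset_eq_degree, SimpleGraph.neighborFinset_eq_filter]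
  simp

lemma sumDG_eq {n : ℕ} (G : SimpleGraph (Fin n)) :
    ∑ x, DG G x = 2 * (G.edgeFinset.card : ℝ) := by
  have := G.sum_degrees_eq_twice_card_edges
  simp only [DG_eq]
  exact_mod_cast this

lemma cnt (n k : ℕ) (h : k ≤ n) : ∑ j : Fin n, (if (j : ℕ) < k then (1 : ℝ) else 0) = k := by
  rw [Fin.sum_univ_eq_sum_range (fun j => if j < k then (1 : ℝ) else 0) n, Finset.sum_boole]
  congr 1
  have : (Finset.range n).filter (fun j => j < k) = Finset.range k := by
    ext j; simp; omega
  rw [this, Finset.card_range]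

lemma cnt1 (n k : ℕ) (h : k < n) : ∑ j : Fin n, (if (j : ℕ) = k then (1 : ℝ) else 0) = 1 := by
  rw [Fin.sum_univ_eq_sum_range (fun j => if j = k then (1 : ℝ) else 0) n]
  simp [h]

/-- the quasi-complete graph -/
noncomputable def QG (n k r : ℕ) : SimpleGraph (Fin n) where
  Adj i j := i ≠ j ∧ (((i : ℕ) < k ∧ (j : ℕ) < k) ∨ ((i : ℕ) = k ∧ (j : ℕ) < r) ∨
    ((j : ℕ) = k ∧ (i : ℕ) < r))
  symm := ⟨by
    rintro x y ⟨h0, h⟩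
    exact ⟨h0.symm, by tauto⟩⟩
  loopless := ⟨fun x h => h.1 rfl⟩

lemma DG_QG (n k r : ℕ) (hr : r < k) (hk : k ≤ n) (hkr : r ≠ 0 → k < n) (i : Fin n) :
    DG (QG n k r) i = (k - 1) * (if (i : ℕ) < k then 1 else 0) + (if (i : ℕ) < r then 1 else 0)
      + r * (if (i : ℕ) = k then 1 else 0) := by
  unfold DG
  have h : ∀ j, (if (QG n k r).Adj i j then (1 : ℝ) else 0) =
      (if (i : ℕ) < k then 1 else 0) * (if (j : ℕ) < k then 1 else 0)
      - (if (i : ℕ) < k then 1 else 0) * (if j = i then 1 else 0)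
      + (if (i : ℕ) < r then 1 else 0) * (if (j : ℕ) = k then 1 else 0)
      + (if (i : ℕ) = k then 1 else 0) * (if (j : ℕ) < r then 1 else 0) := by
    intro j
    simp only [QG]
    by_cases hij : j = i
    · subst hij
      by_cases a : (j : ℕ) < k
      · have : (j : ℕ) ≠ k := by omega
        simp [a, this]
      · have : ¬ (j : ℕ) < r := by omega
        simp [a, this]
    · have hij' : (i ≠ j) := fun h => hij h.symm
      simp only [hij, hij', ne_eq, not_false_eq_true, true_and, if_false, mul_zero, sub_zero]
      rcases lt_trichotomy (i : ℕ) k with a | a | a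
      · have a' : (i : ℕ) ≠ k := by omega
        by_cases b : (j : ℕ) < k
        · have : (j : ℕ) ≠ k := by omega
          simp [a, b, a', this]
        · by_cases c : (j : ℕ) = k <;> simp [a, b, a', c]
      · have a1 : ¬ (i : ℕ) < k := by omega
        have a2 : ¬ (i : ℕ) < r := by omega
        simp [a, not_lt.2 hr.le]
      · have a1 : ¬ (i : ℕ) < k := by omega
        have a2 : ¬ (i : ℕ) < r := by omega
        have a3 : (i : ℕ) ≠ k := by omega
        simp [a1, a2, a3]
  rw [Finset.sum_congr rfl fun j _ => h j]
  simp only [Finset.sum_sub_distrib, Finset.sum_add_distrib, ← Finset.mul_sum]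
  rw [cnt n k hk, cnt n r (by omega)]
  by_cases hr0 : r = 0
  · subst hr0
    by_cases a : (i : ℕ) < k <;> simp [a]
  · rw [cnt1 n k (hkr hr0)]
    by_cases a : (i : ℕ) < k <;> simp [a]

lemma r_cnt1 (n k r : ℕ) (hkr : r ≠ 0 → k < n) :
    (r : ℝ) * ∑ j : Fin n, (if (j : ℕ) = k then (1 : ℝ) else 0) = r := by
  by_cases hr0 : r = 0
  · subst hr0; simp
  · rw [cnt1 n k (hkr hr0)]; ring

lemma sum_QG (n k r : ℕ) (hr : r < k) (hk : k ≤ n) (hkr : r ≠ 0 → k < n) :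
    ∑ i, DG (QG n k r) i = k * (k - 1) + 2 * r := by
  rw [Finset.sum_congr rfl fun j _ => DG_QG n k r hr hk hkr j]
  simp only [Finset.sum_add_distrib, ← Finset.mul_sum]
  rw [cnt n k hk, cnt n r (by omega), r_cnt1 n k r hkr]
  ring

lemma sumsq_QG (n k r : ℕ) (hr : r < k) (hk : k ≤ n) (hkr : r ≠ 0 → k < n) :
    ∑ i, DG (QG n k r) i ^ 2 = k * (k - 1) ^ 2 + r * (2 * k - 1) + r ^ 2 := by
  have h : ∀ i, DG (QG n k r) i ^ 2 =
      (k - 1) ^ 2 * (if (i : ℕ) < k then 1 else 0) + (2 * k - 1) * (if (i : ℕ) < r then 1 else 0)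
      + r * (r * (if (i : ℕ) = k then 1 else 0)) := by
    intro i
    rw [DG_QG n k r hr hk hkr i]
    rcases lt_trichotomy (i : ℕ) k with a | a | a
    · have a' : (i : ℕ) ≠ k := by omega
      by_cases b : (i : ℕ) < r <;> simp [a, b, a']
      ring
    · have a2 : ¬ (i : ℕ) < r := by omega
      simp [a, not_lt.2 hr.le]; ring
    · have a1 : ¬ (i : ℕ) < k := by omega
      have a2 : ¬ (i : ℕ) < r := by omega
      have a3 : (i : ℕ) ≠ k := by omega
      simp [a1, a2, a3]
  rw [Finset.sum_congr rfl fun j _ => h j]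
  simp only [Finset.sum_add_distrib, ← Finset.mul_sum]
  rw [cnt n k hk, cnt n r (by omega), r_cnt1 n k r hkr]
  ring

lemma exists_kr (m : ℕ) : ∃ k r : ℕ, r < k ∧ 2 * m + k = k * k + 2 * r := by
  induction m with
  | zero => exact ⟨1, 0, by norm_num, by norm_num⟩
  | succ m ih =>
    obtain ⟨k, r, h1, h2⟩ := ih
    by_cases h : r + 1 < k
    · exact ⟨k, r + 1, h, by omega⟩
    · have : r + 1 = k := by omega
      exact ⟨k + 1, 0, by omega, by nlinarith⟩

lemma lower_real (k r m : ℝ) (h0 : 0 ≤ r) (h1 : r + 1 ≤ k) (hm : 2 * m = k * (k - 1) + 2 * r) :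
    m * Real.sqrt (8 * m + 1) - 3 * m ≤ k * (k - 1) ^ 2 + r * (2 * k - 1) + r ^ 2 := by
  have hc : 0 < 2 * k - 1 := by linarith
  have hm' : m = (k * (k - 1) + 2 * r) / 2 := by linarith
  have hm0 : 0 ≤ m := by nlinarith
  have hs : Real.sqrt (8 * m + 1) ≤ (2 * k - 1) + 4 * r / (2 * k - 1) := by
    apply Real.sqrt_le_iff.2
    refine ⟨by positivity, ?_⟩
    have e : ((2 * k - 1) + 4 * r / (2 * k - 1)) ^ 2
        = (2 * k - 1) ^ 2 + 8 * r + (4 * r / (2 * k - 1)) ^ 2 := by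
      field_simp; ring
    rw [e, hm']
    nlinarith [sq_nonneg (4 * r / (2 * k - 1))]
  have h2 := mul_le_mul_of_nonneg_left hs hm0
  have h3 : m * (4 * r / (2 * k - 1)) ≤ r * k - r / 2 + 2 * r := by
    rw [mul_div_assoc', div_le_iff₀ hc, hm']
    nlinarith [mul_nonneg h0 (sub_nonneg.2 h1)]
  have h4 : r * k ≤ (k - 1) * k := mul_le_mul_of_nonneg_right (by linarith) (by linarith)
  have h5 : m * (2 * k - 1) - 3 * m = k * (k - 1) * (k - 2) + 2 * r * k - 4 * r := by
    rw [hm']; ring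
  nlinarith [sq_nonneg r]

theorem stmt19 (n m : ℕ) (hn : 2 ≤ n) (hm : 0 < m)
    (hmn : ((n : ℝ) * ((n : ℝ) - 1)) / 4 ≤ (m : ℝ))
    (hex : ∃ G : SimpleGraph (Fin n), G.edgeFinset.card = m) :
    (m : ℝ) * Real.sqrt (8 * (m : ℝ) + 1) - 3 * (m : ℝ) ≤ (fmax n m : ℝ) ∧
    (fmax n m : ℝ) ≤ (m : ℝ) * Real.sqrt (8 * (m : ℝ) + 1) - (m : ℝ) := by
  have hub : ∀ G : SimpleGraph (Fin n), G.edgeFinset.card = m →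
      ((∑ v, G.degree v ^ 2 : ℕ) : ℝ) ≤ (m : ℝ) * Real.sqrt (8 * (m : ℝ) + 1) - (m : ℝ) := by
    intro G hG
    have h1 := main_upper n G
    have h2 := sumDG_eq G
    have h3 := sumDG_le G
    rw [hG] at h2
    have h4 : (∑ x, DG G x) / 2 = m := by rw [h2]; ring
    rw [h4, max_eq_left] at h1
    · push_cast
      simpa only [DG_eq, FF] using h1
    · apply lemB _ _ (by exact_mod_cast (by omega : 1 ≤ n)) hmn
      linarith
  set A : Set ℕ := {k : ℕ | ∃ G : SimpleGraph (Fin n),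
    G.edgeFinset.card = m ∧ ∑ v, G.degree v ^ 2 = k} with hA
  have hfA : fmax n m = sSup A := rfl
  have hne : A.Nonempty := by
    obtain ⟨G, hG⟩ := hex
    exact ⟨_, G, hG, rfl⟩
  have hbdd : BddAbove A := by
    refine ⟨⌊(m : ℝ) * Real.sqrt (8 * (m : ℝ) + 1) - (m : ℝ)⌋₊, ?_⟩
    rintro k ⟨G, hG, rfl⟩
    exact Nat.le_floor (hub G hG)
  constructor
  · obtain ⟨k, r, hr, hkr⟩ := exists_kr m
    have hm2 : 2 * m + n ≤ n * n := by
      obtain ⟨G, hG⟩ := hex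
      have h2 := sumDG_eq G
      have h3 := sumDG_le G
      rw [hG] at h2
      have : (2 * m + n : ℝ) ≤ n * n := by linarith
      exact_mod_cast this
    have hk : k ≤ n := by
      by_contra hc
      nlinarith
    have hkn : r ≠ 0 → k < n := by
      intro h0
      rcases hk.lt_or_eq with h | rfl
      · exact h
      · omega
    have hkr' : 2 * (m : ℝ) = k * (k - 1) + 2 * r := by
      have : (2 * m + k : ℝ) = k * k + 2 * r := by exact_mod_cast hkr
      linarith
    have hl := lower_real k r m (by positivity) (by exact_mod_cast hr) hkr'
    rw [← sumsq_QG n k r hr hk hkn] at hl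
    have he : (QG n k r).edgeFinset.card = m := by
      have h1 := sumDG_eq (QG n k r)
      rw [sum_QG n k r hr hk hkn] at h1
      have : ((QG n k r).edgeFinset.card : ℝ) = m := by linarith
      exact_mod_cast this
    have hmem : (∑ v, (QG n k r).degree v ^ 2) ≤ fmax n m := by
      rw [hfA]
      exact le_csSup hbdd ⟨_, he, rfl⟩
    refine hl.trans ?_
    have : ((∑ v, (QG n k r).degree v ^ 2 : ℕ) : ℝ) ≤ fmax n m := by exact_mod_cast hmem
    push_cast at this
    simpa only [DG_eq] using this
  · obtain ⟨G, hG, hk⟩ := Nat.sSup_mem hne hbdd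
    rw [hfA, ← hk]
    exact hub G hG
end
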